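/- Let x̄ be an AM-stationary point of problem (ODP) and suppose the standing sum-rule assumption holds. Then: (a) if ODP-subMFC is satisfied at x̄, then x̄ is M-stationary; (b) if d ∈ C(x̄) ∩ 𝕊 and ODP-subMFC(d) is satisfied at x̄, then x̄ is M-stationary in direction d. -/

import Mathlib

open Filter Topology Metric Set
open scoped RealInnerProductSpace Pointwise

noncomputable section

/-- Euclidean space `ℝ^n`. -/
abbrev Eu (n : ℕ) := EuclideanSpace ℝ (Fin n)

section Cones

variable {H : Type*} [NormedAddCommGroup H] [InnerProductSpace ℝ H]

/-- Tangent (Bouligand) cone to `Ω` at `x` (empty if `x ∉ Ω`). -/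
def tanCone (Ω : Set H) (x : H) : Set H :=
  {d | x ∈ Ω ∧ ∃ (dk : ℕ → H) (tk : ℕ → ℝ),
    Tendsto dk atTop (𝓝 d) ∧ (∀ k, 0 < tk k) ∧ Tendsto tk atTop (𝓝 0) ∧
    ∀ k, x + tk k • dk k ∈ Ω}

/-- Polar cone of a set. -/
def polarCone (C : Set H) : Set H := {y | ∀ x ∈ C, ⟪x, y⟫ ≤ 0}

/-- Regular (Fréchet) normal cone: polar of the tangent cone (empty if `x ∉ Ω`). -/
def regNormal (Ω : Set H) (x : H) : Set H :=
  {η | x ∈ Ω ∧ η ∈ polarCone (tanCone Ω x)}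

/-- Limiting (Mordukhovich) normal cone (empty if `x ∉ Ω`). -/
def limNormal (Ω : Set H) (x : H) : Set H :=
  {η | x ∈ Ω ∧ ∃ (xk ηk : ℕ → H),
    Tendsto xk atTop (𝓝 x) ∧ Tendsto ηk atTop (𝓝 η) ∧
    ∀ k, ηk k ∈ regNormal Ω (xk k)}

/-- Directional limiting normal cone to `Ω` at `x` in direction `d`. -/
def dirLimNormal (Ω : Set H) (x d : H) : Set H :=
  {η | x ∈ Ω ∧ ∃ (dk : ℕ → H) (tk : ℕ → ℝ) (ηk : ℕ → H),
    Tendsto dk atTop (𝓝 d) ∧ (∀ k, 0 < tk k) ∧ Tendsto tk atTop (𝓝 0) ∧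
    Tendsto ηk atTop (𝓝 η) ∧
    ∀ k, ηk k ∈ regNormal Ω (x + tk k • dk k)}

/-- The pair `(ξ, r)` as an element of the ℓ²-product `H ×₂ ℝ`. -/
def pl2 (ξ : H) (r : ℝ) : WithLp 2 (H × ℝ) := (WithLp.equiv 2 (H × ℝ)).symm (ξ, r)

/-- Epigraph of `φ` as a subset of the ℓ²-product `H ×₂ ℝ`. -/
def epigraphSet (φ : H → ℝ) : Set (WithLp 2 (H × ℝ)) :=
  {p | φ ((WithLp.equiv 2 (H × ℝ)) p).1 ≤ ((WithLp.equiv 2 (H × ℝ)) p).2}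

/-- Limiting subdifferential of `φ` at `x`. -/
def limSubdiff (φ : H → ℝ) (x : H) : Set H :=
  {ξ | pl2 ξ (-1) ∈ limNormal (epigraphSet φ) (pl2 x (φ x))}

/-- Directional limiting subdifferential of `φ` at `x` in direction `d`, where `φd`
denotes the directional derivative `φ'(x; d)`. -/
def dirLimSubdiff (φ : H → ℝ) (x d : H) (φd : ℝ) : Set H :=
  {ξ | pl2 ξ (-1) ∈ dirLimNormal (epigraphSet φ) (pl2 x (φ x)) (pl2 d φd)}

/-- Directional neighborhood `B_{ε,δ}(d)`. -/
def dirNbhd (d : H) (ε δ : ℝ) : Set H :=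
  {y | ‖y‖ ≤ ε ∧ ‖‖d‖ • y - ‖y‖ • d‖ ≤ δ * (‖y‖ * ‖d‖)}

end Cones

section Problem

variable {n l : ℕ}

/-- `F' x d` is the directional derivative of `F` at `x` in direction `d`. -/
def IsDirDeriv (F : Eu n → Eu l) (F' : Eu n → Eu n → Eu l) : Prop :=
  ∀ x d : Eu n,
    Tendsto (fun t : ℝ => t⁻¹ • (F (x + t • d) - F x)) (𝓝[>] (0:ℝ)) (𝓝 (F' x d))

/-- Limiting subdifferential of the scalarization `⟨λ, F⟩` at `x`. -/
def scalSubdiff (F : Eu n → Eu l) (lam : Eu l) (x : Eu n) : Set (Eu n) :=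
  limSubdiff (fun y => ⟪lam, F y⟫) x

/-- Directional limiting subdifferential of `⟨λ, F⟩` at `x` in direction `d`. -/
def scalDirSubdiff (F : Eu n → Eu l) (F' : Eu n → Eu n → Eu l) (lam : Eu l)
    (x d : Eu n) : Set (Eu n) :=
  dirLimSubdiff (fun y => ⟪lam, F y⟫) x d ⟪lam, F' x d⟫

/-- Linearization cone. -/
def linCone (F : Eu n → Eu l) (F' : Eu n → Eu n → Eu l) (Γ : Set (Eu l)) (x : Eu n) :
    Set (Eu n) :=
  {d | F' x d ∈ tanCone Γ (F x)}

/-- Explicit critical cone `C(x̄)`. -/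
def critCone (f : Eu n → ℝ) (F : Eu n → Eu l) (F' : Eu n → Eu n → Eu l)
    (Γ : Set (Eu l)) (x : Eu n) : Set (Eu n) :=
  {d | ⟪gradient f x, d⟫ ≤ 0 ∧ d ∈ linCone F F' Γ x}

/-- Implicit critical cone `Ĉ(x̄)`. -/
def implCritCone (f : Eu n → ℝ) (F : Eu n → Eu l) (Γ : Set (Eu l)) (x : Eu n) :
    Set (Eu n) :=
  {d | ⟪gradient f x, d⟫ ≤ 0 ∧ d ∈ tanCone (F ⁻¹' Γ) x}

/-- M-stationarity. -/
def MStat (f : Eu n → ℝ) (F : Eu n → Eu l) (Γ : Set (Eu l)) (x : Eu n) : Prop :=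
  ∃ lam : Eu l, -gradient f x ∈ scalSubdiff F lam x ∧ lam ∈ limNormal Γ (F x)

/-- M-stationarity in direction `d`. -/
def MStatDir (f : Eu n → ℝ) (F : Eu n → Eu l) (F' : Eu n → Eu n → Eu l)
    (Γ : Set (Eu l)) (x d : Eu n) : Prop :=
  ∃ lam : Eu l, -gradient f x ∈ scalDirSubdiff F F' lam x d ∧
    lam ∈ dirLimNormal Γ (F x) (F' x d)

/-- Metric subregularity constraint qualification in direction `d`. -/
def MSCQdir (F : Eu n → Eu l) (Γ : Set (Eu l)) (x d : Eu n) : Prop :=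
  ∃ ε > (0:ℝ), ∃ δ > (0:ℝ), ∃ κ > (0:ℝ), ∀ y : Eu n, y - x ∈ dirNbhd d ε δ →
    infDist y (F ⁻¹' Γ) ≤ κ * infDist (F y) Γ

/-- Metric subregularity constraint qualification. -/
def MSCQ (F : Eu n → Eu l) (Γ : Set (Eu l)) (x : Eu n) : Prop := MSCQdir F Γ x 0

/-- AM-stationary sequence w.r.t. `x`. -/
def AMSeq (f : Eu n → ℝ) (F : Eu n → Eu l) (Γ : Set (Eu l)) (x : Eu n)
    (xk : ℕ → Eu n) (lamk δk : ℕ → Eu l) (εk : ℕ → Eu n) : Prop :=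
  (∀ k, εk k - gradient f (xk k) ∈ scalSubdiff F (lamk k) (xk k)) ∧
  (∀ k, lamk k ∈ limNormal Γ (F (xk k) - δk k)) ∧
  Tendsto xk atTop (𝓝 x) ∧ Tendsto δk atTop (𝓝 0) ∧ Tendsto εk atTop (𝓝 0)

/-- AM-stationarity. -/
def AMStat (f : Eu n → ℝ) (F : Eu n → Eu l) (Γ : Set (Eu l)) (x : Eu n) : Prop :=
  ∃ xk lamk δk εk, AMSeq f F Γ x xk lamk δk εk

/-- AM-stationary sequence w.r.t. `x` in direction `d`. -/
def AMSeqDir (f : Eu n → ℝ) (F : Eu n → Eu l) (Γ : Set (Eu l)) (x : Eu n)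
    (xk : ℕ → Eu n) (lamk δk : ℕ → Eu l) (εk : ℕ → Eu n) (d : Eu n) : Prop :=
  AMSeq f F Γ x xk lamk δk εk ∧
  (∀ k, xk k ≠ x) ∧
  Tendsto (fun k => ‖xk k - x‖⁻¹ • (xk k - x)) atTop (𝓝 d) ∧
  Tendsto (fun k => ‖xk k - x‖⁻¹ • δk k) atTop (𝓝 (0 : Eu l)) ∧
  (∃ θ : ℕ → ℝ, (∀ k, 0 ≤ θ k) ∧ Tendsto θ atTop (𝓝 0) ∧
    ∀ k, ‖‖δk k‖ • lamk k - ‖lamk k‖ • δk k‖ ≤ ‖δk k‖ * ‖lamk k‖ * θ k) ∧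
  (∃ M : ℝ, ∀ k, ‖δk k‖ * ‖lamk k‖ / ‖xk k - x‖ ≤ M)

/-- AM-stationarity in direction `d`. -/
def AMStatDir (f : Eu n → ℝ) (F : Eu n → Eu l) (Γ : Set (Eu l)) (x d : Eu n) : Prop :=
  ∃ xk lamk δk εk, AMSeqDir f F Γ x xk lamk δk εk d

/-- The Minkowski sum `Σ_i |λ_i| ∂(sgn(λ_i) F_i)(x; d)`. -/
def dirSumSet (F : Eu n → Eu l) (F' : Eu n → Eu n → Eu l) (lam : Eu l) (x d : Eu n) :
    Set (Eu n) :=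
  {v | ∃ s : Fin l → Eu n,
    (∀ i, s i ∈ |lam i| • dirLimSubdiff (fun y => Real.sign (lam i) * F y i) x d
        (Real.sign (lam i) * F' x d i)) ∧
    v = ∑ i, s i}

/-- Standing sum-rule assumption. -/
def SumRule (F : Eu n → Eu l) (F' : Eu n → Eu n → Eu l) : Prop :=
  ∀ (x d : Eu n) (lam : Eu l), scalDirSubdiff F F' lam x d = dirSumSet F F' lam x d

end Problem


section ODP

variable {n l t : ℕ}

/-- The box `Γ_j = ∏_i [a_i^j, b_i^j]` (interval endpoints in the extended reals). -/
def GammaJ (a b : Fin t → Fin l → EReal) (j : Fin t) : Set (Eu l) :=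
  {y | ∀ i, a j i ≤ ((y i : ℝ) : EReal) ∧ ((y i : ℝ) : EReal) ≤ b j i}

/-- The orthodisjunctive set `Γ = ⋃_j Γ_j`. -/
def GammaODP (a b : Fin t → Fin l → EReal) : Set (Eu l) := ⋃ j, GammaJ a b j

/-- The index set `I(x, δ)` of active interval endpoints. -/
def activeI (F : Eu n → Eu l) (a b : Fin t → Fin l → EReal) (x : Eu n) (δ : Eu l) :
    Set (Fin l) :=
  {i | ∃ j, F x - δ ∈ GammaJ a b j ∧
      ((((F x - δ) i : ℝ) : EReal) = a j i ∨ (((F x - δ) i : ℝ) : EReal) = b j i)}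

/-- ODP subset Mangasarian–Fromovitz condition. -/
def ODPsubMFC (f : Eu n → ℝ) (F : Eu n → Eu l) (a b : Fin t → Fin l → EReal)
    (x : Eu n) : Prop :=
  ∃ (I : Set (Fin l)) (xk : ℕ → Eu n) (lamk δk : ℕ → Eu l) (εk : ℕ → Eu n),
    I ⊆ activeI F a b x 0 ∧
    AMSeq f F (GammaODP a b) x xk lamk δk εk ∧
    (∀ k, I = activeI F a b (xk k) (δk k)) ∧
    (I = ∅ ∨ ∀ u : Eu l, u ≠ 0 → (∀ i, 0 ≤ u i) → (∀ i ∉ I, u i = 0) → ∀ k : ℕ,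
      (0 : Eu n) ∉ {v | ∃ s : Fin l → Eu n,
        (∀ i ∈ I, s i ∈ u i • limSubdiff (fun y => Real.sign (lamk k i) * F y i) x) ∧
        v = ∑ i, I.indicator s i})

/-- ODP subset Mangasarian–Fromovitz condition in direction `d`. -/
def ODPsubMFCdir (f : Eu n → ℝ) (F : Eu n → Eu l) (F' : Eu n → Eu n → Eu l)
    (a b : Fin t → Fin l → EReal) (x d : Eu n) : Prop :=
  ∃ (I : Set (Fin l)) (xk : ℕ → Eu n) (lamk δk : ℕ → Eu l) (εk : ℕ → Eu n),
    I ⊆ activeI F a b x 0 ∧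
    AMSeqDir f F (GammaODP a b) x xk lamk δk εk d ∧
    (∀ k, I = activeI F a b (xk k) (δk k)) ∧
    (I = ∅ ∨ ∀ u : Eu l, u ≠ 0 → (∀ i, 0 ≤ u i) → (∀ i ∉ I, u i = 0) → ∀ k : ℕ,
      (0 : Eu n) ∉ {v | ∃ s : Fin l → Eu n,
        (∀ i ∈ I, s i ∈ u i • dirLimSubdiff (fun y => Real.sign (lamk k i) * F y i) x d
            (Real.sign (lamk k i) * F' x d i)) ∧
        v = ∑ i, I.indicator s i})

/-- No nonzero abnormal multiplier constraint qualification. -/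
def NNAMCQ (F : Eu n → Eu l) (Γ : Set (Eu l)) (x : Eu n) : Prop :=
  ∀ lam : Eu l, (0 : Eu n) ∈ scalSubdiff F lam x → lam ∈ limNormal Γ (F x) → lam = 0

/-- First-order sufficient condition for metric subregularity in direction `d`. -/
def FOSCMS (F : Eu n → Eu l) (F' : Eu n → Eu n → Eu l) (Γ : Set (Eu l))
    (x d : Eu n) : Prop :=
  ∀ lam : Eu l, (0 : Eu n) ∈ scalDirSubdiff F F' lam x d →
    lam ∈ dirLimNormal Γ (F x) (F' x d) → lam = 0

end ODP

/-!
The directional objects in direction `0` are the undirected ones, and every null sequence tends to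
`0` in direction `0` at a suitable scale, so both claims concern an AM-stationary sequence
`x^k = x̄ + t_k d^k` with `t_k ↓ 0`, `d^k → d` and `δ^k / t_k → 0`. The sum rule gives
`ε^k - ∇f(x^k) = ∑ i, |λ_i^k| ξ_i^k` with `ξ_i^k ∈ ∂(sgn(λ_i^k) F_i)(x^k)`, and `λ_i^k = 0` for
`i ∉ I` because the orthodisjunctive set is locally invariant along an inactive coordinate. The
`ξ_i^k` are bounded by a Lipschitz constant of `F`; along an ultrafilter they converge and the
signs are constant. By ODP-subMFC the limits `ξ_i` are positively linearly independent over `I`,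
which amounts to a bound `c ‖u‖ ≤ ‖∑ i, u_i ξ_i‖` for `u ≥ 0` that survives perturbation of `ξ`.
Hence the multipliers `λ^k` are bounded, and their limit is the required multiplier since normal
cones and subdifferentials are robust under directional limits.
-/

section DirectionalConvergence

variable {α E E' : Type*} [NormedAddCommGroup E] [NormedSpace ℝ E] [NormedAddCommGroup E']
  [NormedSpace ℝ E'] {G : Filter α} {t : α → ℝ} {z : α → E} {x d : E}

lemma tendsto_of_tendsto_inv_smul_sub (ht : Tendsto t G (𝓝[>] 0))
    (hz : Tendsto (fun k => (t k)⁻¹ • (z k - x)) G (𝓝 d)) : Tendsto z G (𝓝 x) := by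
  have hlim : Tendsto (fun k => x + t k • (t k)⁻¹ • (z k - x)) G (𝓝 x) := by
    simpa using ((tendsto_nhds_of_tendsto_nhdsWithin ht).smul hz).const_add x
  refine hlim.congr' ?_
  filter_upwards [ht self_mem_nhdsWithin] with k hk
  rw [smul_inv_smul₀ (ne_of_gt hk), add_sub_cancel]

-- The scale `√‖v k‖` works wherever `v k ≠ 0`; the summand `1 / (k + 1)` makes it positive.
lemma exists_tendsto_inv_smul_zero {v : ℕ → E} (hv : Tendsto v atTop (𝓝 0)) :
    ∃ t : ℕ → ℝ, Tendsto t atTop (𝓝[>] 0) ∧ Tendsto (fun k => (t k)⁻¹ • v k) atTop (𝓝 0) := by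
  have hsqrt : Tendsto (fun k => √‖v k‖) atTop (𝓝 0) := by
    simpa using hv.norm.sqrt
  refine ⟨fun k => √‖v k‖ + 1 / ((k : ℝ) + 1), tendsto_nhdsWithin_iff.2 ⟨?_, ?_⟩, ?_⟩
  · simpa using hsqrt.add tendsto_one_div_add_atTop_nhds_zero_nat
  · exact Eventually.of_forall fun k => mem_Ioi.2 (by positivity)
  · refine squeeze_zero_norm (fun k => ?_) hsqrt
    rw [norm_smul, norm_inv, Real.norm_of_nonneg (by positivity), inv_mul_le_iff₀ (by positivity)]
    calc ‖v k‖ = √‖v k‖ * √‖v k‖ := (Real.mul_self_sqrt (norm_nonneg _)).symm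
      _ ≤ (√‖v k‖ + 1 / ((k : ℝ) + 1)) * √‖v k‖ := by
        gcongr
        exact le_add_of_nonneg_right (by positivity)

lemma tendsto_inv_smul_sub_of_lipschitzOnWith {F : E → E'} {v : E'} {K : NNReal} {s : Set E}
    (hF : LipschitzOnWith K F s) (hs : s ∈ 𝓝 x)
    (hv : Tendsto (fun r : ℝ => r⁻¹ • (F (x + r • d) - F x)) (𝓝[>] 0) (𝓝 v))
    (ht : Tendsto t G (𝓝[>] 0)) (hz : Tendsto (fun k => (t k)⁻¹ • (z k - x)) G (𝓝 d)) :
    Tendsto (fun k => (t k)⁻¹ • (F (z k) - F x)) G (𝓝 v) := by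
  have hray : Tendsto (fun k => x + t k • d) G (𝓝 x) := by
    simpa using ((tendsto_nhds_of_tendsto_nhdsWithin ht).smul_const d).const_add x
  have herr : Tendsto (fun k => (t k)⁻¹ • (F (z k) - F (x + t k • d))) G (𝓝 0) := by
    have hbound : Tendsto (fun k => K * ‖(t k)⁻¹ • (z k - x) - d‖) G (𝓝 0) := by
      simpa using (tendsto_iff_norm_sub_tendsto_zero.1 hz).const_mul (K : ℝ)
    refine squeeze_zero_norm' ?_ hbound
    filter_upwards [tendsto_of_tendsto_inv_smul_sub ht hz hs, hray hs, ht self_mem_nhdsWithin]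
      with k hzk hrayk hk
    calc ‖(t k)⁻¹ • (F (z k) - F (x + t k • d))‖
        = ‖(t k)⁻¹‖ * ‖F (z k) - F (x + t k • d)‖ := norm_smul _ _
      _ ≤ ‖(t k)⁻¹‖ * (K * ‖z k - (x + t k • d)‖) := by
        gcongr
        exact hF.norm_sub_le hzk hrayk
      _ = K * ‖(t k)⁻¹ • (z k - (x + t k • d))‖ := by rw [norm_smul]; ring
      _ = K * ‖(t k)⁻¹ • (z k - x) - d‖ := by
        rw [← sub_sub, smul_sub _ (z k - x), inv_smul_smul₀ (ne_of_gt hk)]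
  simpa [← smul_add] using herr.add (hv.comp ht)

end DirectionalConvergence

section NormalCones

variable {α H : Type*} [NormedAddCommGroup H] [InnerProductSpace ℝ H] {G : Filter α}
  {Ω : Set H} {x d η : H}

lemma mem_tanCone_of_eventually (hx : x ∈ Ω) (h : ∀ᶠ t : ℝ in 𝓝[>] 0, x + t • d ∈ Ω) :
    d ∈ tanCone Ω x := by
  obtain ⟨t, ht, htΩ⟩ := exists_seq_forall_of_frequently (h.and self_mem_nhdsWithin).frequently
  exact ⟨hx, fun _ => d, t, tendsto_const_nhds, fun k => (htΩ k).2,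
    tendsto_nhds_of_tendsto_nhdsWithin ht, fun k => (htΩ k).1⟩

lemma mem_limNormal_iff_frequently :
    η ∈ limNormal Ω x ↔ x ∈ Ω ∧ ∃ᶠ p in 𝓝 (x, η), p.2 ∈ regNormal Ω p.1 := by
  refine and_congr_right fun _ => ⟨?_, fun h => ?_⟩
  · rintro ⟨z, ζ, hz, hζ, h⟩
    exact (hz.prodMk_nhds hζ).frequently (Frequently.of_forall h)
  · obtain ⟨p, hp, h⟩ := exists_seq_forall_of_frequently h
    exact ⟨fun k => (p k).1, fun k => (p k).2, hp.fst_nhds, hp.snd_nhds, h⟩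

lemma mem_dirLimNormal_iff_frequently :
    η ∈ dirLimNormal Ω x d ↔
      x ∈ Ω ∧ ∃ᶠ p in 𝓝[>] (0 : ℝ) ×ˢ 𝓝 (d, η), p.2.2 ∈ regNormal Ω (x + p.1 • p.2.1) := by
  refine and_congr_right fun _ => ⟨?_, fun h => ?_⟩
  · rintro ⟨e, t, ζ, he, htpos, ht, hζ, h⟩
    have ht' : Tendsto t atTop (𝓝[>] 0) :=
      tendsto_nhdsWithin_iff.2 ⟨ht, Eventually.of_forall htpos⟩
    exact (ht'.prodMk (he.prodMk_nhds hζ)).frequently (Frequently.of_forall h)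
  · have hpos : ∀ᶠ p in 𝓝[>] (0 : ℝ) ×ˢ 𝓝 (d, η), 0 < p.1 :=
      tendsto_fst.eventually self_mem_nhdsWithin
    obtain ⟨p, hp, h⟩ := exists_seq_forall_of_frequently (h.and_eventually hpos)
    have hpair : Tendsto (fun k => (p k).2) atTop (𝓝 (d, η)) := tendsto_snd.comp hp
    exact ⟨fun k => (p k).2.1, fun k => (p k).1, fun k => (p k).2.2, hpair.fst_nhds,
      fun k => (h k).2, tendsto_nhds_of_tendsto_nhdsWithin (tendsto_fst.comp hp),
      hpair.snd_nhds, fun k => (h k).1⟩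

lemma regNormal_subset_limNormal : regNormal Ω x ⊆ limNormal Ω x := fun η hη =>
  ⟨hη.1, fun _ => x, fun _ => η, tendsto_const_nhds, tendsto_const_nhds, fun _ => hη⟩

lemma mem_dirLimNormal_of_tendsto [NeBot G] {t : α → ℝ} {z ζ : α → H} (hx : x ∈ Ω)
    (ht : Tendsto t G (𝓝[>] 0)) (hz : Tendsto (fun k => (t k)⁻¹ • (z k - x)) G (𝓝 d))
    (hζ : Tendsto ζ G (𝓝 η)) (h : ∀ᶠ k in G, ζ k ∈ limNormal Ω (z k)) :
    η ∈ dirLimNormal Ω x d := by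
  refine mem_dirLimNormal_iff_frequently.2 ⟨hx, fun hnot => ?_⟩
  obtain ⟨T, hT, N, hN, hTN⟩ := eventually_prod_iff.1 hnot
  obtain ⟨k, hk, ⟨hTk, htk⟩, hNk⟩ := (h.and ((ht.eventually (hT.and self_mem_nhdsWithin)).and
    ((hz.prodMk_nhds hζ).eventually hN.eventually_nhds))).exists
  have hrescale : Continuous fun p : H × H => ((t k)⁻¹ • (p.1 - x), p.2) := by fun_prop
  obtain ⟨p, hp, hpN⟩ := ((mem_limNormal_iff_frequently.1 hk).2.and_eventually
    ((hrescale.tendsto (z k, ζ k)).eventually hNk)).exists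
  refine hTN hTk hpN ?_
  change p.2 ∈ regNormal Ω (x + t k • (t k)⁻¹ • (p.1 - x))
  rwa [smul_inv_smul₀ (ne_of_gt htk), add_sub_cancel]

lemma dirLimNormal_zero : dirLimNormal Ω x 0 = limNormal Ω x := by
  refine Subset.antisymm (fun η hη => ?_) ?_
  · obtain ⟨hx, e, t, ζ, he, -, ht, hζ, h⟩ := hη
    exact ⟨hx, fun k => x + t k • e k, ζ, by simpa using (ht.smul he).const_add x, hζ, h⟩
  · rintro η ⟨hx, z, ζ, hz, hζ, h⟩
    obtain ⟨t, ht, hzt⟩ := exists_tendsto_inv_smul_zero (tendsto_sub_nhds_zero_iff.2 hz)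
    exact mem_dirLimNormal_of_tendsto hx ht hzt hζ
      (Eventually.of_forall fun k => regNormal_subset_limNormal (h k))

end NormalCones

section Subdifferentials

variable {α H : Type*}

@[simp]
lemma pl2_fst (v : H) (r : ℝ) : (pl2 v r).fst = v := rfl

@[simp]
lemma pl2_snd (v : H) (r : ℝ) : (pl2 v r).snd = r := rfl

variable [NormedAddCommGroup H]

lemma continuous_pl2 : Continuous fun q : H × ℝ => pl2 q.1 q.2 :=
  WithLp.prod_continuous_toLp 2 H ℝ

variable [InnerProductSpace ℝ H] {G : Filter α} {φ : H → ℝ} {x d ξ : H} {p η : WithLp 2 (H × ℝ)}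

lemma pl2_mem_tanCone_epigraphSet {v : H} {r : ℝ} (hp : p ∈ epigraphSet φ)
    (h : ∀ᶠ t : ℝ in 𝓝[>] 0, φ (p.fst + t • v) ≤ φ p.fst + t * r) :
    pl2 v r ∈ tanCone (epigraphSet φ) p :=
  mem_tanCone_of_eventually hp (h.mono fun t ht => ht.trans (add_le_add_left hp (t * r)))

lemma snd_nonpos_of_mem_regNormal_epigraphSet (hη : η ∈ regNormal (epigraphSet φ) p) :
    η.snd ≤ 0 := by
  have hup : pl2 (0 : H) 1 ∈ tanCone (epigraphSet φ) p := by
    refine pl2_mem_tanCone_epigraphSet hη.1 ?_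
    filter_upwards [self_mem_nhdsWithin] with t ht
    simpa using le_of_lt ht
  simpa using hη.2 _ hup

lemma norm_fst_le_of_mem_regNormal_epigraphSet {K : NNReal} {s : Set H}
    (hφ : LipschitzOnWith K φ s) (hs : s ∈ 𝓝 p.fst) (hη : η ∈ regNormal (epigraphSet φ) p) :
    ‖η.fst‖ ≤ K * -η.snd := by
  have hsteep : pl2 η.fst (K * ‖η.fst‖) ∈ tanCone (epigraphSet φ) p := by
    refine pl2_mem_tanCone_epigraphSet hη.1 ?_
    have hray : Tendsto (fun t : ℝ => p.fst + t • η.fst) (𝓝[>] 0) (𝓝 p.fst) := by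
      have hcont : Continuous fun t : ℝ => p.fst + t • η.fst := by fun_prop
      simpa using (hcont.tendsto 0).mono_left nhdsWithin_le_nhds
    filter_upwards [hray hs, self_mem_nhdsWithin] with t hts ht
    have hle := hφ.le_add_mul hts (mem_of_mem_nhds hs)
    rw [dist_self_add_left, norm_smul, Real.norm_of_nonneg (le_of_lt ht)] at hle
    linarith
  have hpolar : ‖η.fst‖ ^ 2 + K * ‖η.fst‖ * η.snd ≤ 0 := by
    simpa [mul_comm] using hη.2 _ hsteep
  have hsnd := snd_nonpos_of_mem_regNormal_epigraphSet hη
  rcases (norm_nonneg η.fst).eq_or_lt with hzero | hpos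
  · rw [← hzero]
    exact mul_nonneg K.2 (neg_nonneg.2 hsnd)
  · refine le_of_mul_le_mul_left ?_ hpos
    linarith

lemma norm_le_of_mem_limSubdiff {K : NNReal} {s : Set H} (hφ : LipschitzOnWith K φ s)
    (hs : s ∈ 𝓝 x) (hξ : ξ ∈ limSubdiff φ x) : ‖ξ‖ ≤ K := by
  obtain ⟨-, p, η, hp, hη, h⟩ := hξ
  have hp_fst : Tendsto (fun k => (p k).fst) atTop (𝓝 x) :=
    ((WithLp.continuous_fst 2 H ℝ).tendsto _).comp hp
  have hη_fst : Tendsto (fun k => (η k).fst) atTop (𝓝 ξ) :=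
    ((WithLp.continuous_fst 2 H ℝ).tendsto _).comp hη
  have hη_snd : Tendsto (fun k => (η k).snd) atTop (𝓝 (-1)) :=
    ((WithLp.continuous_snd 2 H ℝ).tendsto _).comp hη
  have hbound : Tendsto (fun k => K * -(η k).snd) atTop (𝓝 (K : ℝ)) := by
    simpa using hη_snd.neg.const_mul (K : ℝ)
  refine le_of_tendsto_of_tendsto hη_fst.norm hbound ?_
  filter_upwards [hp_fst.eventually (eventually_mem_nhds_iff.2 hs)] with k hk
  exact norm_fst_le_of_mem_regNormal_epigraphSet hφ hk (h k)

lemma zero_mem_limSubdiff_of_isLocalMin (h : IsLocalMin φ x) : (0 : H) ∈ limSubdiff φ x := by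
  refine regNormal_subset_limNormal ⟨le_refl (φ x), ?_⟩
  rintro v ⟨-, e, t, he, htpos, ht, hmem⟩
  have he_fst : Tendsto (fun k => (e k).fst) atTop (𝓝 v.fst) :=
    ((WithLp.continuous_fst 2 H ℝ).tendsto v).comp he
  have he_snd : Tendsto (fun k => (e k).snd) atTop (𝓝 v.snd) :=
    ((WithLp.continuous_snd 2 H ℝ).tendsto v).comp he
  have hbase : Tendsto (fun k => x + t k • (e k).fst) atTop (𝓝 x) := by
    simpa using (ht.smul he_fst).const_add x
  have hsnd : 0 ≤ v.snd := by
    refine ge_of_tendsto he_snd ?_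
    filter_upwards [hbase.eventually h] with k hk
    have hepi : φ (x + t k • (e k).fst) ≤ φ x + t k * (e k).snd := hmem k
    exact nonneg_of_mul_nonneg_right (by linarith) (htpos k)
  simpa using hsnd

lemma dirLimSubdiff_zero (φ : H → ℝ) (x : H) : dirLimSubdiff φ x 0 0 = limSubdiff φ x :=
  congrArg (fun N => {ξ | pl2 ξ (-1) ∈ N}) dirLimNormal_zero

lemma mem_dirLimSubdiff_of_tendsto [NeBot G] {t : α → ℝ} {z ζ : α → H} {φd : ℝ}
    (ht : Tendsto t G (𝓝[>] 0)) (hz : Tendsto (fun k => (t k)⁻¹ • (z k - x)) G (𝓝 d))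
    (hφ : Tendsto (fun k => (t k)⁻¹ • (φ (z k) - φ x)) G (𝓝 φd))
    (hζ : Tendsto ζ G (𝓝 ξ)) (h : ∀ᶠ k in G, ζ k ∈ limSubdiff φ (z k)) :
    ξ ∈ dirLimSubdiff φ x d φd :=
  mem_dirLimNormal_of_tendsto (le_refl (φ x)) ht
    ((continuous_pl2.tendsto (d, φd)).comp (hz.prodMk_nhds hφ))
    ((continuous_pl2.tendsto (ξ, -1)).comp (hζ.prodMk_nhds tendsto_const_nhds)) h

lemma zero_mem_dirLimSubdiff_const (c : ℝ) (x d : H) :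
    (0 : H) ∈ dirLimSubdiff (fun _ => c) x d 0 := by
  have hray : Tendsto (fun r : ℝ => r⁻¹ • (x + r • d - x)) (𝓝[>] 0) (𝓝 d) := by
    refine tendsto_const_nhds.congr' ?_
    filter_upwards [self_mem_nhdsWithin] with r hr
    rw [add_sub_cancel_left, inv_smul_smul₀ (ne_of_gt hr)]
  exact mem_dirLimSubdiff_of_tendsto tendsto_id hray (by simp) tendsto_const_nhds
    (Eventually.of_forall fun _ =>
      zero_mem_limSubdiff_of_isLocalMin (Eventually.of_forall fun _ => le_refl c))

end Subdifferentials

section SignedLimits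

variable {α H : Type*} [NormedAddCommGroup H] [InnerProductSpace ℝ H]

lemma exists_tendsto_of_eventually_norm_le {E : Type*} [NormedAddCommGroup E] [ProperSpace E]
    {U : Ultrafilter α} {g : α → E} {K : ℝ} (h : ∀ᶠ k in (U : Filter α), ‖g k‖ ≤ K) :
    ∃ L, Tendsto g U (𝓝 L) := by
  obtain ⟨L, -, hL⟩ := (isCompact_closedBall (0 : E) K).ultrafilter_le_nhds' (U.map g)
    (h.mono fun k hk => mem_closedBall_zero_iff.2 hk)
  exact ⟨L, hL⟩

lemma exists_eventually_sign_eq (U : Ultrafilter α) (c : α → ℝ) :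
    ∃ σ, ∀ᶠ k in (U : Filter α), Real.sign (c k) = σ := by
  have hmem : ∀ᶠ k in (U : Filter α), ∃ σ ∈ ({-1, 0, 1} : Set ℝ), Real.sign (c k) = σ :=
    Eventually.of_forall fun k => ⟨_, Real.sign_apply_eq (c k), rfl⟩
  obtain ⟨σ, -, hσ⟩ := (Ultrafilter.eventually_exists_mem_iff (toFinite _)).1 hmem
  exact ⟨σ, hσ⟩

lemma eventually_sign_eq_of_tendsto {G : Filter α} {c : α → ℝ} {c₀ : ℝ}
    (hc : Tendsto c G (𝓝 c₀)) (h₀ : c₀ ≠ 0) :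
    ∀ᶠ k in G, Real.sign (c k) = Real.sign c₀ := by
  rcases h₀.lt_or_gt with hneg | hpos
  · filter_upwards [hc.eventually_lt_const hneg] with k hk
    rw [Real.sign_of_neg hk, Real.sign_of_neg hneg]
  · filter_upwards [hc.eventually_const_lt hpos] with k hk
    rw [Real.sign_of_pos hk, Real.sign_of_pos hpos]

lemma exists_tendsto_mem_dirLimSubdiff [ProperSpace H] {U : Ultrafilter α} {φ : H → ℝ} {x d : H}
    {φd : ℝ} {K : NNReal} {s : Set H} {t c : α → ℝ} {z ξ : α → H}
    (hφ : LipschitzOnWith K φ s) (hs : s ∈ 𝓝 x) (ht : Tendsto t U (𝓝[>] 0))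
    (hz : Tendsto (fun k => (t k)⁻¹ • (z k - x)) U (𝓝 d))
    (hφd : Tendsto (fun k => (t k)⁻¹ • (φ (z k) - φ x)) U (𝓝 φd))
    (hξ : ∀ k, ξ k ∈ limSubdiff (fun y => Real.sign (c k) * φ y) (z k)) :
    ∃ ξ₀, Tendsto ξ U (𝓝 ξ₀) ∧ ∀ᶠ k in (U : Filter α),
      ξ₀ ∈ dirLimSubdiff (fun y => Real.sign (c k) * φ y) x d (Real.sign (c k) * φd) := by
  obtain ⟨σ, hσ⟩ := exists_eventually_sign_eq U c
  have hξσ : ∀ᶠ k in (U : Filter α), ξ k ∈ limSubdiff (fun y => σ * φ y) (z k) := by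
    filter_upwards [hσ] with k hk
    exact hk ▸ hξ k
  have hlip : LipschitzOnWith (‖σ‖₊ * K) (fun y => σ * φ y) s :=
    (lipschitzWith_smul σ).comp_lipschitzOnWith hφ
  obtain ⟨ξ₀, hξ₀⟩ : ∃ ξ₀, Tendsto ξ U (𝓝 ξ₀) := by
    refine exists_tendsto_of_eventually_norm_le (K := (‖σ‖₊ * K : NNReal)) ?_
    filter_upwards [hξσ, (tendsto_of_tendsto_inv_smul_sub ht hz).eventually
      (eventually_mem_nhds_iff.2 hs)] with k hk hzk
    exact norm_le_of_mem_limSubdiff hlip hzk hk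
  have hslope : Tendsto (fun k => (t k)⁻¹ • (σ * φ (z k) - σ * φ x)) U (𝓝 (σ * φd)) := by
    simpa only [smul_eq_mul, mul_sub, mul_left_comm] using hφd.const_mul σ
  refine ⟨ξ₀, hξ₀, ?_⟩
  filter_upwards [hσ] with k hk
  rw [hk]
  exact mem_dirLimSubdiff_of_tendsto ht hz hslope hξ₀ hξσ

-- For `c₀ = 0` the sign of `c k` may stay nonzero; then `|c₀| • ξ = 0` is a multiple of the
-- subgradient `0` of the zero function instead.
lemma abs_smul_mem_abs_smul_dirLimSubdiff {U : Ultrafilter α} {φ : H → ℝ} {x d ξ : H} {φd : ℝ}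
    {c : α → ℝ} {c₀ : ℝ} (hc : Tendsto c U (𝓝 c₀))
    (hξ : ∀ᶠ k in (U : Filter α),
      ξ ∈ dirLimSubdiff (fun y => Real.sign (c k) * φ y) x d (Real.sign (c k) * φd)) :
    |c₀| • ξ ∈ |c₀| • dirLimSubdiff (fun y => Real.sign c₀ * φ y) x d (Real.sign c₀ * φd) := by
  rcases eq_or_ne c₀ 0 with rfl | h₀
  · simp only [abs_zero, zero_smul, Real.sign_zero, zero_mul]
    exact mem_smul_set.2 ⟨0, zero_mem_dirLimSubdiff_const 0 x d, smul_zero 0⟩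
  · obtain ⟨k, hk, hξk⟩ := ((eventually_sign_eq_of_tendsto hc h₀).and hξ).exists
    rw [hk] at hξk
    exact smul_mem_smul_set hξk

end SignedLimits

section PositiveLinearIndependence

variable {ι E : Type*} [Fintype ι] [NormedAddCommGroup E] [NormedSpace ℝ E]

/-- Positive linear independence of the vectors `ξ i`, `i ∈ I`: no nontrivial combination of them
with nonnegative coefficients vanishes. Coefficients on `I` are encoded as `u : ι → ℝ` vanishing
off `I`. This is the conclusion of ODP-subMFC about a selection of subgradients. -/
def PosLinIndepOn (ξ : ι → E) (I : Set ι) : Prop :=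
  ∀ u : ι → ℝ, 0 ≤ u → (∀ i ∉ I, u i = 0) → ∑ i, u i • ξ i = 0 → u = 0

namespace PosLinIndepOn

variable {ξ : ι → E} {I : Set ι}

lemma exists_mul_norm_le_norm_sum (hξ : PosLinIndepOn ξ I) :
    ∃ c > 0, ∀ u : ι → ℝ, 0 ≤ u → (∀ i ∉ I, u i = 0) → c * ‖u‖ ≤ ‖∑ i, u i • ξ i‖ := by
  set S : Set (ι → ℝ) := sphere 0 1 ∩ (Ici 0 ∩ ⋂ i ∈ Iᶜ, {u | u i = 0})
  have hS : IsCompact S := (isCompact_sphere 0 1).inter_right (isClosed_Ici.inter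
    (isClosed_biInter fun i _ => isClosed_eq (continuous_apply i) continuous_const))
  have hcont : Continuous fun u : ι → ℝ => ‖∑ i, u i • ξ i‖ := by fun_prop
  obtain ⟨c, hc, hcS⟩ : ∃ c > 0, ∀ u ∈ S, c ≤ ‖∑ i, u i • ξ i‖ := by
    refine hS.exists_forall_le' hcont.continuousOn fun u hu => norm_pos_iff.2 fun hzero => ?_
    obtain ⟨hnorm, hnonneg, hoff⟩ := hu
    rw [hξ u hnonneg (by simpa using hoff) hzero] at hnorm
    simp at hnorm
  refine ⟨c, hc, fun u hu hoff => ?_⟩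
  rcases eq_or_ne u 0 with rfl | hne
  · simp
  have hpos : 0 < ‖u‖ := norm_pos_iff.2 hne
  have hmem : ‖u‖⁻¹ • u ∈ S := by
    refine ⟨by simp [norm_smul, hpos.ne'], smul_nonneg (inv_nonneg.2 hpos.le) hu, ?_⟩
    simp +contextual [hoff]
  have hunit := hcS _ hmem
  simp only [Pi.smul_apply, smul_assoc, ← Finset.smul_sum] at hunit
  rwa [norm_smul, norm_inv, norm_norm, le_inv_mul_iff₀ hpos, mul_comm] at hunit

lemma exists_eventually_mul_norm_le_norm_sum (hξ : PosLinIndepOn ξ I) :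
    ∃ c > 0, ∀ᶠ ζ in 𝓝 ξ, ∀ u : ι → ℝ, 0 ≤ u → (∀ i ∉ I, u i = 0) →
      c * ‖u‖ ≤ ‖∑ i, u i • ζ i‖ := by
  obtain ⟨c, hc, hle⟩ := hξ.exists_mul_norm_le_norm_sum
  have hdist : Tendsto (fun ζ : ι → E => ∑ i, ‖ξ i - ζ i‖) (𝓝 ξ) (𝓝 0) := by
    have hcont : Continuous fun ζ : ι → E => ∑ i, ‖ξ i - ζ i‖ := by fun_prop
    simpa using hcont.tendsto ξ
  refine ⟨c / 2, half_pos hc, ?_⟩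
  filter_upwards [hdist.eventually_lt_const (half_pos hc)] with ζ hζ u hu hoff
  have hperturb : ‖∑ i, u i • (ξ i - ζ i)‖ ≤ ‖u‖ * (c / 2) := calc
    ‖∑ i, u i • (ξ i - ζ i)‖ ≤ ∑ i, ‖u‖ * ‖ξ i - ζ i‖ := norm_sum_le_of_le _ fun i _ => by
        rw [norm_smul]
        gcongr
        exact norm_le_pi_norm u i
    _ = ‖u‖ * ∑ i, ‖ξ i - ζ i‖ := (Finset.mul_sum _ _ _).symm
    _ ≤ ‖u‖ * (c / 2) := by gcongr
  have hsplit : ∑ i, u i • ξ i = ∑ i, u i • ζ i + ∑ i, u i • (ξ i - ζ i) := by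
    simp [smul_sub]
  have htriangle := norm_add_le (∑ i, u i • ζ i) (∑ i, u i • (ξ i - ζ i))
  rw [← hsplit] at htriangle
  linarith [hle u hu hoff]

lemma exists_tendsto_of_tendsto_sum {α : Type*} {U : Ultrafilter α} {ζ : α → ι → E}
    {w : α → ι → ℝ} {g : E} (hξ : PosLinIndepOn ξ I) (hζ : Tendsto ζ U (𝓝 ξ))
    (hw : ∀ k, ∀ i ∉ I, w k i = 0)
    (hsum : Tendsto (fun k => ∑ i, |w k i| • ζ k i) U (𝓝 g)) :
    ∃ w₀, Tendsto w U (𝓝 w₀) := by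
  obtain ⟨c, hc, hle⟩ := hξ.exists_eventually_mul_norm_le_norm_sum
  refine exists_tendsto_of_eventually_norm_le (K := (‖g‖ + 1) / c) ?_
  filter_upwards [hζ.eventually hle, hsum.norm.eventually_le_const (lt_add_one _)] with k hk hgk
  have hbound := hk |w k| (abs_nonneg _) fun i hi => by simp [hw k i hi]
  have hnorm : ‖w k‖ ≤ ‖|w k|‖ :=
    (pi_norm_le_iff_of_nonneg (norm_nonneg _)).2 fun i => by simpa using norm_le_pi_norm |w k| i
  rw [le_div_iff₀' hc]
  exact (mul_le_mul_of_nonneg_left hnorm hc.le).trans (hbound.trans hgk)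

end PosLinIndepOn

lemma posLinIndepOn_of_zero_notMem {l : ℕ} {S : Fin l → Set E} {I : Set (Fin l)} {ξ : Fin l → E}
    (h : I = ∅ ∨ ∀ u : Eu l, u ≠ 0 → (∀ i, 0 ≤ u i) → (∀ i ∉ I, u i = 0) →
      (0 : E) ∉ {v | ∃ s : Fin l → E, (∀ i ∈ I, s i ∈ u i • S i) ∧ v = ∑ i, I.indicator s i})
    (hξ : ∀ i ∈ I, ξ i ∈ S i) : PosLinIndepOn ξ I := by
  intro u hu hoff hsum
  rcases h with rfl | h
  · exact funext fun i => hoff i (notMem_empty i)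
  by_contra hne
  refine h (WithLp.toLp 2 u) (by simpa using hne) hu hoff
    ⟨fun i => u i • ξ i, fun i hi => smul_mem_smul_set (hξ i hi), ?_⟩
  rw [← hsum]
  refine Finset.sum_congr rfl fun i _ => ?_
  by_cases hi : i ∈ I
  · simp [hi]
  · simp [hi, hoff i hi]

end PositiveLinearIndependence

section Orthodisjunctive

variable {n l t : ℕ} {a b : Fin t → Fin l → EReal} {y η : Eu l} {i : Fin l}

lemma continuous_coe_apply (i : Fin l) : Continuous fun y : Eu l => ((y i : ℝ) : EReal) :=
  continuous_coe_real_ereal.comp (by fun_prop)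

lemma isClosed_GammaJ (a b : Fin t → Fin l → EReal) (j : Fin t) : IsClosed (GammaJ a b j) := by
  simp only [GammaJ, Set.ofPred_forall]
  exact isClosed_iInter fun i => (isClosed_le continuous_const (continuous_coe_apply i)).inter
    (isClosed_le (continuous_coe_apply i) continuous_const)

lemma eventually_inactive (hi : ∀ j, y ∈ GammaJ a b j → a j i < (y i : ℝ) ∧ (y i : ℝ) < b j i) :
    ∀ᶠ z in 𝓝 y, ∀ j, z ∈ GammaJ a b j → a j i < (z i : ℝ) ∧ (z i : ℝ) < b j i := by
  refine eventually_all.2 fun j => ?_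
  by_cases hy : y ∈ GammaJ a b j
  · have hcont := (continuous_coe_apply i).tendsto y
    filter_upwards [hcont.eventually_const_lt (hi j hy).1, hcont.eventually_lt_const (hi j hy).2]
      with z hza hzb _ using ⟨hza, hzb⟩
  · filter_upwards [(isClosed_GammaJ a b j).isOpen_compl.mem_nhds hy] with z hz hzj
    exact absurd hzj hz

lemma single_mem_tanCone_GammaODP {j : Fin t} (hy : y ∈ GammaJ a b j)
    (hi : a j i < (y i : ℝ) ∧ (y i : ℝ) < b j i) (c : ℝ) :
    EuclideanSpace.single i c ∈ tanCone (GammaODP a b) y := by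
  refine mem_tanCone_of_eventually (mem_iUnion.2 ⟨j, hy⟩) ?_
  have hline : Tendsto (fun s : ℝ => (((y + s • EuclideanSpace.single i c : Eu l) i : ℝ) : EReal))
      (𝓝[>] 0) (𝓝 (y i : ℝ)) := by
    have hcont : Continuous fun s : ℝ => (y + s • EuclideanSpace.single i c : Eu l) := by fun_prop
    simpa only [Function.comp_def, zero_smul, add_zero] using
      (((continuous_coe_apply i).comp hcont).tendsto 0).mono_left
        (nhdsWithin_le_nhds (s := Ioi 0))
  filter_upwards [hline.eventually_const_lt hi.1, hline.eventually_lt_const hi.2] with s hsa hsb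
  refine mem_iUnion.2 ⟨j, fun i' => ?_⟩
  rcases eq_or_ne i' i with rfl | hne
  · exact ⟨hsa.le, hsb.le⟩
  · simpa [hne] using hy i'

lemma apply_eq_zero_of_mem_regNormal_GammaODP (hη : η ∈ regNormal (GammaODP a b) y)
    (hi : ∀ j, y ∈ GammaJ a b j → a j i < (y i : ℝ) ∧ (y i : ℝ) < b j i) : η i = 0 := by
  obtain ⟨j, hj⟩ := mem_iUnion.1 hη.1
  have hle (c : ℝ) : c * η i ≤ 0 := by
    simpa [EuclideanSpace.inner_single_left] using
      hη.2 _ (single_mem_tanCone_GammaODP hj (hi j hj) c)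
  linarith [hle 1, hle (-1)]

lemma apply_eq_zero_of_mem_limNormal_GammaODP (hη : η ∈ limNormal (GammaODP a b) y)
    (hi : ∀ j, y ∈ GammaJ a b j → a j i < (y i : ℝ) ∧ (y i : ℝ) < b j i) : η i = 0 := by
  obtain ⟨-, z, ζ, hz, hζ, h⟩ := hη
  have hcoord : Tendsto (fun k => ζ k i) atTop (𝓝 (η i)) :=
    ((by fun_prop : Continuous fun y : Eu l => y i).tendsto η).comp hζ
  refine tendsto_nhds_unique hcoord (tendsto_const_nhds.congr' ?_)
  filter_upwards [hz.eventually (eventually_inactive hi)] with k hk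
  exact (apply_eq_zero_of_mem_regNormal_GammaODP (h k) hk).symm

lemma apply_eq_zero_of_notMem_activeI {F : Eu n → Eu l} {x : Eu n} {δ : Eu l}
    (hη : η ∈ limNormal (GammaODP a b) (F x - δ)) (hi : i ∉ activeI F a b x δ) : η i = 0 := by
  refine apply_eq_zero_of_mem_limNormal_GammaODP hη fun j hj => ?_
  exact ⟨(hj i).1.lt_of_ne fun h => hi ⟨j, hj, Or.inl h.symm⟩,
    (hj i).2.lt_of_ne fun h => hi ⟨j, hj, Or.inr h⟩⟩

end Orthodisjunctive

section Stationarity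

variable {n l : ℕ} {f : Eu n → ℝ} {F : Eu n → Eu l} {F' : Eu n → Eu n → Eu l} {Γ : Set (Eu l)}
  {x d : Eu n}

lemma continuousAt_gradient (hf : ContDiffAt ℝ 1 f x) : ContinuousAt (gradient f) x :=
  (InnerProductSpace.toDual ℝ (Eu n)).symm.continuous.continuousAt.comp
    (hf.continuousAt_fderiv one_ne_zero)

lemma IsDirDeriv.apply_zero (hF' : IsDirDeriv F F') (x : Eu n) : F' x 0 = 0 :=
  tendsto_nhds_unique (hF' x 0) (by simp)

lemma IsDirDeriv.scalDirSubdiff_zero (hF' : IsDirDeriv F F') (lam : Eu l) (x : Eu n) :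
    scalDirSubdiff F F' lam x 0 = scalSubdiff F lam x := by
  rw [scalDirSubdiff, hF'.apply_zero, inner_zero_right, dirLimSubdiff_zero, scalSubdiff]

lemma IsDirDeriv.mStatDir_zero_iff (hF' : IsDirDeriv F F') :
    MStatDir f F F' Γ x 0 ↔ MStat f F Γ x := by
  simp only [MStatDir, MStat, hF'.scalDirSubdiff_zero, hF'.apply_zero, dirLimNormal_zero]

lemma SumRule.exists_sum_of_mem_scalSubdiff (hsum : SumRule F F') (hF' : IsDirDeriv F F')
    {lam : Eu l} {v : Eu n} (hv : v ∈ scalSubdiff F lam x) :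
    ∃ ξ : Fin l → Eu n, (∀ i, ξ i ∈ limSubdiff (fun y => Real.sign (lam i) * F y i) x) ∧
      v = ∑ i, |lam i| • ξ i := by
  rw [← hF'.scalDirSubdiff_zero, hsum] at hv
  obtain ⟨s, hs, rfl⟩ := hv
  choose ξ hξ hξs using fun i => mem_smul_set.1 (hs i)
  refine ⟨ξ, fun i => ?_, Finset.sum_congr rfl fun i _ => (hξs i).symm⟩
  rw [← dirLimSubdiff_zero]
  simpa [hF'.apply_zero] using hξ i

lemma exists_tendsto_subgradients {U : Ultrafilter ℕ} {t : ℕ → ℝ} {z : ℕ → Eu n} {lam : ℕ → Eu l}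
    {ξ : ℕ → Fin l → Eu n} (hLip : LocallyLipschitz F) (hF' : IsDirDeriv F F')
    (ht : Tendsto t U (𝓝[>] 0)) (hz : Tendsto (fun k => (t k)⁻¹ • (z k - x)) U (𝓝 d))
    (hξ : ∀ k i, ξ k i ∈ limSubdiff (fun y => Real.sign (lam k i) * F y i) (z k)) :
    ∃ ξ₀, Tendsto ξ U (𝓝 ξ₀) ∧ ∀ᶠ k in (U : Filter ℕ), ∀ i,
      ξ₀ i ∈ dirLimSubdiff (fun y => Real.sign (lam k i) * F y i) x d
        (Real.sign (lam k i) * F' x d i) := by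
  obtain ⟨K, s, hs, hK⟩ := hLip x
  have hslope := tendsto_inv_smul_sub_of_lipschitzOnWith hK hs (hF' x d) ht hz
  have hcoord (i : Fin l) : ∃ ξ₀, Tendsto (fun k => ξ k i) U (𝓝 ξ₀) ∧ ∀ᶠ k in (U : Filter ℕ),
      ξ₀ ∈ dirLimSubdiff (fun y => Real.sign (lam k i) * F y i) x d
        (Real.sign (lam k i) * F' x d i) := by
    have hlip : LipschitzOnWith K (fun y => F y i) s :=
      LipschitzOnWith.of_dist_le_mul fun u hu v hv => (hK.dist_le_mul u hu v hv).trans' <| by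
        simpa [dist_eq_norm] using PiLp.norm_apply_le (F u - F v) i
    refine exists_tendsto_mem_dirLimSubdiff hlip hs ht hz ?_ fun k => hξ k i
    exact ((by fun_prop : Continuous fun y : Eu l => y i).tendsto _).comp hslope
  choose ξ₀ hξ₀ hmem using hcoord
  exact ⟨ξ₀, tendsto_pi_nhds.2 hξ₀, eventually_all.2 hmem⟩

theorem mStatDir_of_posLinIndepOn {I : Set (Fin l)} {t : ℕ → ℝ} {z ε : ℕ → Eu n}
    {lam δ : ℕ → Eu l} (hgrad : ContinuousAt (gradient f) x) (hLip : LocallyLipschitz F)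
    (hF' : IsDirDeriv F F') (hsum : SumRule F F') (hx : F x ∈ Γ)
    (hseq : AMSeq f F Γ x z lam δ ε) (ht : Tendsto t atTop (𝓝[>] 0))
    (hz : Tendsto (fun k => (t k)⁻¹ • (z k - x)) atTop (𝓝 d))
    (hδ : Tendsto (fun k => (t k)⁻¹ • δ k) atTop (𝓝 0)) (hoff : ∀ k, ∀ i ∉ I, lam k i = 0)
    (hMFC : ∀ k (ξ : Fin l → Eu n), (∀ i ∈ I, ξ i ∈ dirLimSubdiff
      (fun y => Real.sign (lam k i) * F y i) x d (Real.sign (lam k i) * F' x d i)) →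
      PosLinIndepOn ξ I) :
    MStatDir f F F' Γ x d := by
  obtain ⟨hsub, hnormal, hzx, -, hε⟩ := hseq
  set U := hyperfilter ℕ
  have hU : (U : Filter ℕ) ≤ atTop := Nat.hyperfilter_le_atTop
  choose ξ hξ hξsum using fun k => hsum.exists_sum_of_mem_scalSubdiff hF' (hsub k)
  obtain ⟨ξ₀, hξ₀, hmem⟩ := exists_tendsto_subgradients hLip hF' (ht.mono_left hU)
    (hz.mono_left hU) hξ
  have hindep : PosLinIndepOn ξ₀ I :=
    let ⟨k, hk⟩ := hmem.exists
    hMFC k ξ₀ fun i _ => hk i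
  have hcomb : Tendsto (fun k => ∑ i, |lam k i| • ξ k i) U (𝓝 (-gradient f x)) := by
    simpa [← hξsum] using (hε.sub (hgrad.tendsto.comp hzx)).mono_left hU
  obtain ⟨w₀, hw₀⟩ := hindep.exists_tendsto_of_tendsto_sum (w := fun k => (lam k).ofLp) hξ₀ hoff
    hcomb
  have hlam : Tendsto lam U (𝓝 (WithLp.toLp 2 w₀)) :=
    ((PiLp.continuous_toLp 2 _).tendsto w₀).comp hw₀
  have hgradsum : -gradient f x = ∑ i, |w₀ i| • ξ₀ i :=
    tendsto_nhds_unique hcomb (tendsto_finsetSum _ fun i _ =>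
      (hw₀.apply_nhds i).abs.smul (hξ₀.apply_nhds i))
  have hslope : Tendsto (fun k => (t k)⁻¹ • (F (z k) - δ k - F x)) U (𝓝 (F' x d)) := by
    obtain ⟨K, s, hs, hK⟩ := hLip x
    simpa [← smul_sub, sub_right_comm] using
      ((tendsto_inv_smul_sub_of_lipschitzOnWith hK hs (hF' x d) ht hz).sub hδ).mono_left hU
  refine ⟨WithLp.toLp 2 w₀, ?_, mem_dirLimNormal_of_tendsto hx (ht.mono_left hU) hslope hlam
    (Eventually.of_forall hnormal)⟩
  rw [hsum]
  exact ⟨_, fun i => abs_smul_mem_abs_smul_dirLimSubdiff (hw₀.apply_nhds i)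
    (hmem.mono fun k hk => hk i), hgradsum⟩

variable {m : ℕ} {a b : Fin m → Fin l → EReal}

theorem ODPsubMFC.mStat (hMFC : ODPsubMFC f F a b x) (hgrad : ContinuousAt (gradient f) x)
    (hLip : LocallyLipschitz F) (hF' : IsDirDeriv F F') (hsum : SumRule F F')
    (hx : F x ∈ GammaODP a b) : MStat f F (GammaODP a b) x := by
  obtain ⟨I, z, lam, δ, ε, -, hseq, hI, hindep⟩ := hMFC
  have ⟨_, hnormal, hz, hδ, _⟩ := hseq
  have hpair : Tendsto (fun k => (z k - x, δ k)) atTop (𝓝 0) :=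
    (tendsto_sub_nhds_zero_iff.2 hz).prodMk_nhds hδ
  obtain ⟨t, ht, hscaled⟩ := exists_tendsto_inv_smul_zero hpair
  refine hF'.mStatDir_zero_iff.1 (mStatDir_of_posLinIndepOn (I := I) hgrad hLip hF' hsum hx hseq ht
    hscaled.fst_nhds hscaled.snd_nhds (fun k i hi => ?_) fun k ξ hξ => ?_)
  · exact apply_eq_zero_of_notMem_activeI (hnormal k) (hI k ▸ hi)
  · refine posLinIndepOn_of_zero_notMem
      (hindep.imp_right fun h u hne hnonneg hoff => h u hne hnonneg hoff k) fun i hi => ?_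
    simpa [hF'.apply_zero, dirLimSubdiff_zero] using hξ i hi

theorem ODPsubMFCdir.mStatDir (hMFC : ODPsubMFCdir f F F' a b x d)
    (hgrad : ContinuousAt (gradient f) x) (hLip : LocallyLipschitz F) (hF' : IsDirDeriv F F')
    (hsum : SumRule F F') (hx : F x ∈ GammaODP a b) : MStatDir f F F' (GammaODP a b) x d := by
  obtain ⟨I, z, lam, δ, ε, -, ⟨hseq, hne, hdir, hδ, -, -⟩, hI, hindep⟩ := hMFC
  have ht : Tendsto (fun k => ‖z k - x‖) atTop (𝓝[>] 0) :=
    tendsto_nhdsWithin_iff.2 ⟨tendsto_iff_norm_sub_tendsto_zero.1 hseq.2.2.1,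
      Eventually.of_forall fun k => norm_pos_iff.2 (sub_ne_zero.2 (hne k))⟩
  exact mStatDir_of_posLinIndepOn hgrad hLip hF' hsum hx hseq ht hdir hδ
    (fun k i hi => apply_eq_zero_of_notMem_activeI (hseq.2.1 k) (hI k ▸ hi))
    fun k ξ hξ => posLinIndepOn_of_zero_notMem
      (hindep.imp_right fun h u hne hnonneg hoff => h u hne hnonneg hoff k) hξ

end Stationarity


theorem stmt18_general {n l t : ℕ} {f : Eu n → ℝ} {F : Eu n → Eu l} {F' : Eu n → Eu n → Eu l}
    {a b : Fin t → Fin l → EReal} {x : Eu n} (hf : ContDiffAt ℝ 1 f x)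
    (hLip : LocallyLipschitz F) (hF' : IsDirDeriv F F') (hsum : SumRule F F')
    (hfeas : F x ∈ GammaODP a b) :
    (ODPsubMFC f F a b x → MStat f F (GammaODP a b) x) ∧
    (∀ d, ODPsubMFCdir f F F' a b x d → MStatDir f F F' (GammaODP a b) x d) :=
  have hgrad := continuousAt_gradient hf
  ⟨fun h => h.mStat hgrad hLip hF' hsum hfeas, fun _ h => h.mStatDir hgrad hLip hF' hsum hfeas⟩

/-- (Directional) ODP-subMFC serves as a qualification condition ensuring (directional)
M-stationarity of AM-stationary points of the orthodisjunctive problem. -/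
theorem stmt18 {n l t : ℕ}
    (f : Eu n → ℝ) (hf : ContDiff ℝ 1 f)
    (F : Eu n → Eu l) (F' : Eu n → Eu n → Eu l)
    (hLip : LocallyLipschitz F) (hF' : IsDirDeriv F F')
    (a b : Fin t → Fin l → EReal) (hab : ∀ j i, a j i ≤ b j i)
    (hsum : SumRule F F')
    (x : Eu n) (hfeas : F x ∈ GammaODP a b)
    (hAM : AMStat f F (GammaODP a b) x) :
    (ODPsubMFC f F a b x → MStat f F (GammaODP a b) x) ∧
    (∀ d ∈ critCone f F F' (GammaODP a b) x, ‖d‖ = 1 →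
      ODPsubMFCdir f F F' a b x d → MStatDir f F F' (GammaODP a b) x d) := by
  have h := stmt18_general hf.contDiffAt hLip hF' hsum hfeas
  exact ⟨h.1, fun d _ _ => h.2 d⟩

end
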